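/- Let n ≥ 1 and define the matrix A : Matrix (Fin n) (Fin n) ℝ by A(i,j) = 1/(2i + 2j + 1), where i, j ∈ {0, 1, ..., n-1} are 0-indexed (so the (1,1), 1-indexed, entry is 1 and the first row is 1, 1/3, 1/5, ...). Then A is invertible and the sum of all entries of A⁻¹ equals 2n² - n. -/

import Mathlib

/-- The Hilbert-type matrix with entries `1/(2i+2j+1)` (0-indexed). -/
noncomputable def hilbertOdd (n : ℕ) : Matrix (Fin n) (Fin n) ℝ :=
  Matrix.of fun i j => 1 / (2 * ((i : ℕ) : ℝ) + 2 * ((j : ℕ) : ℝ) + 1)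

/-!
Expand `f / ∏ j, (X + y j)`, with `deg f` less than the number of factors, into partial fractions
`∑ j, c j / (X + y j)`. Evaluating at `x i` says that the Cauchy matrix `1 / (x i + y j)` sends `c`
to the values of `f / ∏ j, (X + y j)` at the `x i`. As `f` can be interpolated through any data at
the `x i`, the matrix is surjective, hence invertible. The choice
`f = ∏ j, (X + y j) - ∏ j, (X - x j)` yields the all-ones vector, so the sum of the entries of the
inverse is `∑ j, c j`. Clearing denominators, this is the coefficient of `X ^ (n - 1)` in `f`, `n`
being the number of factors, and so it equals `∑ j, (x j + y j)`.
-/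

open Polynomial Lagrange Matrix

section Nodal

variable {R ι : Type*} [CommRing R] (s : Finset ι) (v w : ι → R)

theorem degree_nodal_sub_nodal_lt [Nontrivial R] : (nodal s v - nodal s w).degree < s.card := by
  simpa only [degree_nodal] using degree_sub_lt_left (p := nodal s v) (q := nodal s w)
    (by simp only [degree_nodal]) nodal_ne_zero
    (by rw [nodal_monic.leadingCoeff, nodal_monic.leadingCoeff])

theorem coeff_nodal_sub_nodal_card_pred :
    (nodal s v - nodal s w).coeff (s.card - 1) = ∑ i ∈ s, (w i - v i) := by
  obtain rfl | hs := s.eq_empty_or_nonempty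
  · simp
  · rw [coeff_sub, nodal_eq, nodal_eq, prod_X_sub_C_coeff_card_pred _ _ hs.card_pos,
      prod_X_sub_C_coeff_card_pred _ _ hs.card_pos, Finset.sum_sub_distrib]
    ring

end Nodal

section Cauchy

variable {F κ ι : Type*} [Field F]

/-- The Cauchy matrix with entries `1 / (x i + y j)`, in the convention with a plus sign; an entry
with `x i + y j = 0` is `0`. -/
def cauchyMatrix (x : κ → F) (y : ι → F) : Matrix κ ι F :=
  of fun i j => (x i + y j)⁻¹

variable [Fintype ι] [DecidableEq ι]

/-- The coefficients `c j` of the partial fraction expansion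
`f / ∏ j, (X + y j) = ∑ j, c j / (X + y j)`, for distinct `y j` and `f` of degree less than the
number of factors. -/
noncomputable def partialFractionCoeff (y : ι → F) (f : F[X]) (j : ι) : F :=
  nodalWeight Finset.univ (-y) j * f.eval (-y j)

variable {x y : ι → F} {f : F[X]}

theorem cauchyMatrix_mulVec_partialFractionCoeff {x : κ → F} (hy : y.Injective)
    (hxy : ∀ i j, x i + y j ≠ 0) (hf : f.degree < Fintype.card ι) :
    cauchyMatrix x y *ᵥ partialFractionCoeff y f =
      fun i => f.eval (x i) / ∏ j, (x i + y j) := by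
  funext i
  have hnode : ∀ j ∈ Finset.univ, x i ≠ (-y) j := fun j _ h =>
    hxy i j (eq_neg_iff_add_eq_zero.mp h)
  have hprod : ∏ j, (x i + y j) ≠ 0 := Finset.prod_ne_zero_iff.mpr fun j _ => hxy i j
  rw [eq_div_iff hprod, eq_comm]
  calc f.eval (x i)
      = (interpolate Finset.univ (-y) fun j => f.eval ((-y) j)).eval (x i) := by
        rw [← eq_interpolate (v := -y) (neg_injective.comp hy).injOn hf]
    _ = (nodal Finset.univ (-y)).eval (x i) *
          ∑ j, nodalWeight Finset.univ (-y) j * (x i - (-y) j)⁻¹ * f.eval ((-y) j) :=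
        eval_interpolate_not_at_node _ hnode
    _ = (∏ j, (x i + y j)) * ∑ j, (x i + y j)⁻¹ * partialFractionCoeff y f j := by
        simp only [eval_nodal, partialFractionCoeff, Pi.neg_apply, sub_neg_eq_add,
          mul_left_comm, mul_assoc]
    _ = (cauchyMatrix x y *ᵥ partialFractionCoeff y f) i * ∏ j, (x i + y j) := mul_comm _ _

theorem sum_partialFractionCoeff (hy : y.Injective) (hf : f.degree < Fintype.card ι) :
    ∑ j, partialFractionCoeff y f j = f.coeff (Fintype.card ι - 1) := by
  rw [← Finset.card_univ, coeff_eq_sum (v := -y) (neg_injective.comp hy).injOn hf]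
  refine Finset.sum_congr rfl fun j _ => ?_
  rw [partialFractionCoeff, nodalWeight, Finset.prod_inv_distrib, Pi.neg_apply, div_eq_inv_mul]

theorem isUnit_cauchyMatrix (hx : x.Injective) (hy : y.Injective)
    (hxy : ∀ i j, x i + y j ≠ 0) : IsUnit (cauchyMatrix x y) := by
  refine mulVec_surjective_iff_isUnit.mp fun b => ?_
  let f := interpolate Finset.univ x fun i => b i * ∏ j, (x i + y j)
  have hf : f.degree < Fintype.card ι := degree_interpolate_lt _ hx.injOn
  refine ⟨partialFractionCoeff y f, ?_⟩
  rw [cauchyMatrix_mulVec_partialFractionCoeff hy hxy hf]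
  funext i
  rw [eval_interpolate_at_node _ hx.injOn (Finset.mem_univ i),
    mul_div_cancel_right₀ _ (Finset.prod_ne_zero_iff.mpr fun j _ => hxy i j)]

theorem sum_inv_cauchyMatrix (hx : x.Injective) (hy : y.Injective)
    (hxy : ∀ i j, x i + y j ≠ 0) :
    ∑ i, ∑ j, (cauchyMatrix x y)⁻¹ i j = ∑ i, (x i + y i) := by
  let f := nodal Finset.univ (-y) - nodal Finset.univ x
  have hf : f.degree < Fintype.card ι := degree_nodal_sub_nodal_lt _ _ _
  have heval (i : ι) : f.eval (x i) = ∏ j, (x i + y j) := by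
    simp only [f, eval_sub, eval_nodal_at_node (Finset.mem_univ i), eval_nodal, Pi.neg_apply,
      sub_neg_eq_add, sub_zero]
  have hones : cauchyMatrix x y *ᵥ partialFractionCoeff y f = 1 := by
    rw [cauchyMatrix_mulVec_partialFractionCoeff hy hxy hf]
    funext i
    rw [heval, div_self (Finset.prod_ne_zero_iff.mpr fun j _ => hxy i j), Pi.one_apply]
  have := (isUnit_cauchyMatrix hx hy hxy).invertible
  calc ∑ i, ∑ j, (cauchyMatrix x y)⁻¹ i j
      = ∑ i, ((cauchyMatrix x y)⁻¹ *ᵥ 1) i := by simp only [mulVec, dotProduct_one]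
    _ = ∑ i, partialFractionCoeff y f i := by rw [inv_mulVec_eq_vec hones.symm]
    _ = f.coeff (Fintype.card ι - 1) := sum_partialFractionCoeff hy hf
    _ = ∑ i, (x i - (-y) i) := coeff_nodal_sub_nodal_card_pred _ _ _
    _ = ∑ i, (x i + y i) := by simp only [Pi.neg_apply, sub_neg_eq_add]

end Cauchy

theorem hilbertOdd_eq_cauchyMatrix (n : ℕ) :
    hilbertOdd n =
      cauchyMatrix (fun i : Fin n => 2 * ((i : ℕ) : ℝ)) fun j : Fin n => 2 * ((j : ℕ) : ℝ) + 1 := by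
  ext i j
  simp only [hilbertOdd, cauchyMatrix, of_apply, one_div, add_assoc]

theorem sum_range_four_mul_add_one {R : Type*} [CommRing R] (n : ℕ) :
    ∑ i ∈ Finset.range n, (4 * (i : R) + 1) = 2 * (n : R) ^ 2 - n := by
  induction n with
  | zero => simp
  | succ n ih =>
    rw [Finset.sum_range_succ, ih]
    push_cast
    ring

/-- The matrix `A(i,j) = 1/(2i+2j+1)` (0-indexed) is invertible and the sum of all
entries of its inverse equals `2n² - n`. -/
theorem hilbertOdd_inverse_entry_sum (n : ℕ) (hn : 1 ≤ n) :
    IsUnit (hilbertOdd n) ∧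
      ∑ i, ∑ j, (hilbertOdd n)⁻¹ i j = 2 * (n : ℝ) ^ 2 - n := by
  have hx : Function.Injective fun i : Fin n => 2 * ((i : ℕ) : ℝ) :=
    (mul_right_injective₀ two_ne_zero).comp (Nat.cast_injective.comp Fin.val_injective)
  have hy : Function.Injective fun j : Fin n => 2 * ((j : ℕ) : ℝ) + 1 :=
    (add_left_injective 1).comp hx
  have hxy (i j : Fin n) : 2 * ((i : ℕ) : ℝ) + (2 * ((j : ℕ) : ℝ) + 1) ≠ 0 := by positivity
  rw [hilbertOdd_eq_cauchyMatrix]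
  refine ⟨isUnit_cauchyMatrix hx hy hxy, ?_⟩
  calc ∑ i, ∑ j, (cauchyMatrix _ _)⁻¹ i j
      = ∑ i : Fin n, (2 * ((i : ℕ) : ℝ) + (2 * ((i : ℕ) : ℝ) + 1)) :=
        sum_inv_cauchyMatrix hx hy hxy
    _ = ∑ i : Fin n, (4 * ((i : ℕ) : ℝ) + 1) := Finset.sum_congr rfl fun i _ => by ring
    _ = ∑ i ∈ Finset.range n, (4 * (i : ℝ) + 1) :=
        Fin.sum_univ_eq_sum_range (fun i : ℕ => 4 * (i : ℝ) + 1) n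
    _ = 2 * (n : ℝ) ^ 2 - n := sum_range_four_mul_add_one n
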